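/- For any c > 0 and q > 0 there exists a constant C > 0, depending only on c and q, such that for all t > 0: ∫₀ᵗ (t−τ)^{−1/2} e^{−c(t−τ)} (1+τ)^{−q} dτ ≤ C(1+t)^{−q}. -/

import Mathlib

/-!
Put `s = t − τ`. Since `1 + t ≤ (1 + τ)(1 + s)`, the weight satisfies
`(1 + τ)^(−q) ≤ (1 + t)^(−q) (1 + s)^q`, and `(1 + s)^q ≤ K e^{(c/2)s}` for a constant `K`
depending only on `c` and `q`. The integrand is therefore at most
`K (1 + t)^(−q) s^(−1/2) e^{−(c/2)s}`, and the last two factors have a finite integral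
over `(0, ∞)` (a Gamma integral).
-/

open MeasureTheory

/-- A power of `1 + s` is dominated by `e^{(c/2)s}`, because
`1 + s ≤ (1 + 1/d) e^{ds}` with `d = c / (2q)`. -/
lemma one_add_rpow_le_exp (c q : ℝ) (hc : 0 < c) (hq : 0 < q) (s : ℝ) (hs : 0 ≤ s) :
    (1 + s) ^ q ≤ (1 + 2 * q / c) ^ q * Real.exp (c / 2 * s) := by
  have h1 : 1 + s ≤ (1 + 2 * q / c) * Real.exp (c / (2 * q) * s) := by
    have h2 := Real.add_one_le_exp (c / (2 * q) * s)
    calc 1 + s ≤ (1 + 2 * q / c) * (c / (2 * q) * s + 1) := by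
          have h3 : (1 + 2 * q / c) * (c / (2 * q) * s + 1)
              = 1 + s + (c / (2 * q) * s + 2 * q / c) := by
            field_simp
            ring
          have : 0 ≤ c / (2 * q) * s + 2 * q / c := by positivity
          linarith
      _ ≤ _ := by gcongr
  calc (1 + s) ^ q ≤ ((1 + 2 * q / c) * Real.exp (c / (2 * q) * s)) ^ q := by gcongr
    _ = _ := by
      rw [Real.mul_rpow (by positivity) (by positivity), ← Real.exp_mul]
      congr 2
      field_simp

/-- The pointwise bound on the integrand. At `τ = t` both sides vanish, since
`0 ^ (-(1/2)) = 0` for real powers. -/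
lemma integrand_le (c q : ℝ) (hc : 0 < c) (hq : 0 < q) (t τ : ℝ) (h0 : 0 ≤ τ) (ht : τ ≤ t) :
    (t - τ) ^ (-(1/2 : ℝ)) * Real.exp (-c * (t - τ)) * (1 + τ) ^ (-q) ≤
      (1 + 2 * q / c) ^ q * (1 + t) ^ (-q) *
        ((t - τ) ^ (-(1/2 : ℝ)) * Real.exp (-(c / 2) * (t - τ))) := by
  have hs : 0 ≤ t - τ := sub_nonneg.2 ht
  have ht0 : 0 ≤ t := h0.trans ht
  have hw : (1 + τ) ^ (-q) ≤ (1 + t) ^ (-q) * (1 + (t - τ)) ^ q := by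
    rw [Real.rpow_neg (by positivity), Real.rpow_neg (by positivity),
      inv_mul_eq_div, le_div_iff₀ (by positivity), inv_mul_le_iff₀ (by positivity),
      ← Real.mul_rpow (by positivity) (by positivity)]
    exact Real.rpow_le_rpow (by positivity) (by nlinarith [mul_nonneg h0 hs]) hq.le
  have he : Real.exp (-c * (t - τ)) * Real.exp (c / 2 * (t - τ))
      = Real.exp (-(c / 2) * (t - τ)) := by
    rw [← Real.exp_add]
    ring_nf
  have hp := Real.rpow_nonneg hs (-(1/2 : ℝ))
  calc _ ≤ (t - τ) ^ (-(1/2 : ℝ)) * Real.exp (-c * (t - τ)) *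
        ((1 + t) ^ (-q) * ((1 + 2 * q / c) ^ q * Real.exp (c / 2 * (t - τ)))) := by
        refine mul_le_mul_of_nonneg_left (hw.trans ?_) (by positivity)
        exact mul_le_mul_of_nonneg_left (one_add_rpow_le_exp c q hc hq _ hs) (by positivity)
    _ = _ := by
        rw [← he]
        ring

/-- Decay of the singular integral `∫₀ᵗ (t−τ)^{−1/2} e^{−c(t−τ)}(1+τ)^{−q} dτ`
(inequality (4.24) of the paper). -/
theorem singular_exponential_integral_decay (c q : ℝ) (hc : 0 < c) (hq : 0 < q) :
    ∃ C : ℝ, 0 < C ∧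
      ∀ t : ℝ, 0 < t →
        (∫ τ in (0:ℝ)..t,
            (t - τ) ^ (-(1/2 : ℝ)) * Real.exp (-c * (t - τ)) * (1 + τ) ^ (-q)) ≤
          C * (1 + t) ^ (-q) := by
  set g : ℝ → ℝ := fun s => s ^ (-(1/2 : ℝ)) * Real.exp (-(c / 2) * s) with hg
  have hgi : IntegrableOn g (Set.Ioi 0) := by
    have := integrableOn_rpow_mul_exp_neg_mul_rpow (p := 1) (s := -(1/2 : ℝ)) (b := c / 2)
      (by norm_num) (by norm_num) (by positivity)
    simpa only [Real.rpow_one] using this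
  have hg0 : ∀ s, 0 ≤ s → 0 ≤ g s := fun s hs =>
    mul_nonneg (Real.rpow_nonneg hs _) (Real.exp_pos _).le
  have hI : 0 ≤ ∫ s in Set.Ioi 0, g s :=
    setIntegral_nonneg measurableSet_Ioi fun s hs => hg0 s (le_of_lt hs)
  set K : ℝ := (1 + 2 * q / c) ^ q with hK
  have hKpos : 0 < K := by positivity
  refine ⟨K * ((∫ s in Set.Ioi 0, g s) + 1), by positivity, fun t ht => ?_⟩
  have hgt : IntervalIntegrable g volume 0 t :=
    (intervalIntegrable_iff_integrableOn_Ioc_of_le ht.le).2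
      (hgi.mono_set Set.Ioc_subset_Ioi_self)
  have hgr : IntervalIntegrable (fun τ => g (t - τ)) volume 0 t := by
    simpa using (hgt.comp_sub_left t).symm
  have hmono : (∫ τ in (0:ℝ)..t,
      (t - τ) ^ (-(1/2 : ℝ)) * Real.exp (-c * (t - τ)) * (1 + τ) ^ (-q)) ≤
      ∫ τ in (0:ℝ)..t, K * (1 + t) ^ (-q) * g (t - τ) := by
    rw [intervalIntegral.integral_of_le ht.le, intervalIntegral.integral_of_le ht.le]
    -- for a nonnegative integrand only the majorant has to be shown integrable
    refine integral_mono_of_nonneg ?_ (hgr.1.const_mul _) ?_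
    · filter_upwards [ae_restrict_mem measurableSet_Ioc] with τ hτ
      have h1 := Real.rpow_nonneg (sub_nonneg.2 hτ.2) (-(1/2 : ℝ))
      have h2 : 0 < 1 + τ := by linarith [hτ.1]
      simp only [Pi.zero_apply]
      positivity
    · filter_upwards [ae_restrict_mem measurableSet_Ioc] with τ hτ
      exact integrand_le c q hc hq t τ hτ.1.le hτ.2
  have hle : (∫ τ in (0:ℝ)..t, g (t - τ)) ≤ ∫ s in Set.Ioi 0, g s := by
    rw [intervalIntegral.integral_comp_sub_left g t, sub_self, sub_zero,
      intervalIntegral.integral_of_le ht.le]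
    refine setIntegral_mono_set hgi ?_ Set.Ioc_subset_Ioi_self.eventuallyLE
    filter_upwards [ae_restrict_mem measurableSet_Ioi] with s hs using hg0 s (le_of_lt hs)
  have hw : 0 < (1 + t) ^ (-q) := by positivity
  calc _ ≤ _ := hmono
    _ = K * (1 + t) ^ (-q) * ∫ τ in (0:ℝ)..t, g (t - τ) :=
        intervalIntegral.integral_const_mul _ _
    _ ≤ K * (1 + t) ^ (-q) * ((∫ s in Set.Ioi 0, g s) + 1) := by
        gcongr
        linarith
    _ = _ := by ring
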